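/- arXiv:2202.05634 — 2 statements merged into one kernel-verified Lean document; each statement's English description precedes it below -/
import Mathlib

section
/- Let γ > 1, τ > 0, T > 0, R > 0 and ρ̄ > 0, and set σ := √(γρ̄^{γ−1} + 1/(τρ̄²)) (the value √(p′(ρ̄) + 1/(τρ̄²)) for p(ρ) = ρ^γ). Suppose (ρ, u, S) ∈ C¹([0,T) × ℝ; ℝ³) solves the relaxation system ρ_t + (ρu)_x = 0, ρu_t + ρuu_x + (ρ^γ)_x = S_x, τρ(S_t + uS_x) − u_x = −S with ρ > 0, such that (ρ, u, S) and its first-order partial derivatives are bounded on [0,t] × ℝ for every t ∈ [0,T), and such that the initial data satisfy (ρ(0,x) − ρ̄, u(0,x), S(0,x)) = (0,0,0) for all |x| ≥ R. Then for every t ∈ [0,T) and every x with |x| ≥ R + σt one has (ρ(t,x), u(t,x), S(t,x)) = (ρ̄, 0, 0). -/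
/-- Time partial derivative, taken within the time interval `[0, T)`. -/
noncomputable def pderivT (T : ℝ) (f : ℝ × ℝ → ℝ) (p : ℝ × ℝ) : ℝ :=
  derivWithin (fun s => f (s, p.2)) (Set.Ico 0 T) p.1

/-- Space partial derivative. -/
noncomputable def pderivX (f : ℝ × ℝ → ℝ) (p : ℝ × ℝ) : ℝ :=
  deriv (fun y => f (p.1, y)) p.2

/-! In the linearisation at the rest state `(ρ̄, 0, 0)` the characteristic speeds are `0` and `±σ`.
Its Riemann invariants, evaluated at the deviation from rest of a solution of the nonlinear system,
are transported along the straight lines of these speeds up to source terms which are products of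
continuous functions and components of the deviation. Straight lines of slope at most `σ` that end
in a backward triangle of slope `σ` do not leave it, and the triangle is compact; so if the
deviation vanishes on the base, a Gronwall argument for a maximum weighted by `e^{-Ks}` shows that
it vanishes on the whole triangle. -/

open Set Filter Topology Asymptotics

section Compact

variable {X F : Type*} [TopologicalSpace X] {K : Set X}

lemma exists_norm_eq_mul_of_isCompact [NormedAddCommGroup F] {f : X → F} {g : X → ℝ}
    (hK : IsCompact K) (hne : K.Nonempty) (hf : ContinuousOn f K) (hg : ContinuousOn g K)
    (hpos : ∀ p ∈ K, 0 < g p) :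
    ∃ m, 0 ≤ m ∧ (∃ q ∈ K, ‖f q‖ = m * g q) ∧ ∀ p ∈ K, ‖f p‖ ≤ m * g p := by
  obtain ⟨q, hq, hmax⟩ := hK.exists_isMaxOn hne (hf.norm.div hg fun p hp => (hpos p hp).ne')
  refine ⟨‖f q‖ / g q, div_nonneg (norm_nonneg _) (hpos q hq).le,
    ⟨q, hq, (div_mul_cancel₀ _ (hpos q hq).ne').symm⟩, fun p hp => ?_⟩
  exact (div_le_iff₀ (hpos p hp)).1 (hmax hp)

lemma isBigO_mul_of_continuousOn_of_isCompact [Norm F] {a f : X → ℝ} {g : X → F}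
    (ha : ContinuousOn a K) (hK : IsCompact K) (hf : f =O[𝓟 K] g) :
    (fun p => a p * f p) =O[𝓟 K] g := by
  have h := (ha.isBigO_principal hK (c := (1 : ℝ)) (by simp)).mul (isBigO_refl f (𝓟 K))
  simp only [one_mul] at h
  exact h.trans hf

lemma comp_sub_isBigO_of_isCompact {φ : ℝ → ℝ} {s : Set ℝ} {b : ℝ} {f : X → ℝ} (hs : s ∈ 𝓝 b)
    (hφ : ContinuousOn φ s) (hφb : DifferentiableAt ℝ φ b) (hK : IsCompact K)
    (hf : ContinuousOn f K) (hfs : MapsTo f K s) :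
    (fun p => φ (f p) - φ b) =O[𝓟 K] fun p => f p - b := by
  have hslope : ContinuousOn (fun p => dslope φ b (f p)) K :=
    ((continuousOn_dslope hs).2 ⟨hφ, hφb⟩).comp hf hfs
  refine (isBigO_mul_of_continuousOn_of_isCompact hslope hK
    (isBigO_refl (fun p => f p - b) _)).congr_left fun p => ?_
  rw [← sub_smul_dslope, smul_eq_mul, mul_comm]

end Compact

section Triangle

/-- The closed backward triangle with apex `(t, x)`, base on the initial line and sides of slope
`σ`: the domain of dependence of `(t, x)` for signals of speed at most `σ`. -/
def backwardTriangle (σ t x : ℝ) : Set (ℝ × ℝ) :=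
  {p | p.1 ∈ Icc 0 t ∧ |p.2 - x| ≤ σ * (t - p.1)}

/-- The straight line of slope `c` through `p`, parametrised by time. -/
def characteristic (c : ℝ) (p : ℝ × ℝ) (s : ℝ) : ℝ × ℝ :=
  (s, p.2 + c * (s - p.1))

@[simp]
lemma characteristic_fst_self (c : ℝ) (p : ℝ × ℝ) : characteristic c p p.1 = p := by
  simp [characteristic]

lemma hasDerivAt_characteristic (c : ℝ) (p : ℝ × ℝ) (s : ℝ) :
    HasDerivAt (characteristic c p) (1, c) s := by
  refine (hasDerivAt_id s).prodMk ?_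
  simpa using (((hasDerivAt_id s).sub_const p.1).const_mul c).const_add p.2

variable {σ t x : ℝ}

lemma apex_mem_backwardTriangle (ht : 0 ≤ t) : (t, x) ∈ backwardTriangle σ t x := by
  simp [backwardTriangle, ht]

lemma isCompact_backwardTriangle (hσ : 0 ≤ σ) : IsCompact (backwardTriangle σ t x) := by
  refine (isCompact_Icc (a := ((0, x - σ * t) : ℝ × ℝ)) (b := (t, x + σ * t))).of_isClosed_subset
    ?_ ?_
  · exact (isClosed_Icc.preimage continuous_fst).inter
      (isClosed_le (f := fun p : ℝ × ℝ => |p.2 - x|) (by fun_prop) (by fun_prop))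
  · rintro ⟨s, y⟩ ⟨hs, hy⟩
    have hσs : 0 ≤ σ * s := mul_nonneg hσ hs.1
    have := abs_le.1 hy
    simp only [mem_Icc, Prod.mk_le_mk] at hs ⊢
    exact ⟨⟨hs.1, by linarith⟩, hs.2, by linarith⟩

lemma characteristic_mem_backwardTriangle {c s : ℝ} {p : ℝ × ℝ} (hc : |c| ≤ σ)
    (hp : p ∈ backwardTriangle σ t x) (hs : s ∈ Icc 0 p.1) :
    characteristic c p s ∈ backwardTriangle σ t x := by
  refine ⟨⟨hs.1, hs.2.trans hp.1.2⟩, ?_⟩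
  calc |p.2 + c * (s - p.1) - x| = |(p.2 - x) + c * (s - p.1)| := by ring_nf
    _ ≤ |p.2 - x| + |c| * |s - p.1| := (abs_add_le _ _).trans_eq (by rw [abs_mul])
    _ ≤ σ * (t - p.1) + σ * (p.1 - s) := by
      rw [abs_sub_comm s, abs_of_nonneg (sub_nonneg.2 hs.2)]
      exact add_le_add hp.2 (mul_le_mul_of_nonneg_right hc (sub_nonneg.2 hs.2))
    _ = σ * (t - s) := by ring

end Triangle

section Transport

variable {σ t x : ℝ}

lemma norm_le_of_norm_transport_le {E : Type*} [NormedAddCommGroup E] [NormedSpace ℝ E]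
    {f : ℝ × ℝ → E} {f' : ℝ × ℝ → ℝ × ℝ →L[ℝ] E} {c : ℝ} {B B' : ℝ → ℝ} (hc : |c| ≤ σ)
    (hf : ∀ p ∈ backwardTriangle σ t x, HasFDerivWithinAt f (f' p) (backwardTriangle σ t x) p)
    (hB : ∀ s, HasDerivAt B (B' s) s)
    (hbase : ∀ p ∈ backwardTriangle σ t x, p.1 = 0 → ‖f p‖ ≤ B 0)
    (hbound : ∀ p ∈ backwardTriangle σ t x, ‖f' p (1, c)‖ ≤ B' p.1)
    {p : ℝ × ℝ} (hp : p ∈ backwardTriangle σ t x) : ‖f p‖ ≤ B p.1 := by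
  have hmaps : MapsTo (characteristic c p) (Icc 0 p.1) (backwardTriangle σ t x) :=
    fun s hs => characteristic_mem_backwardTriangle hc hp hs
  have hderiv : ∀ s ∈ Icc 0 p.1, HasDerivWithinAt (f ∘ characteristic c p)
      (f' (characteristic c p s) (1, c)) (Icc 0 p.1) s := fun s hs =>
    (hf _ (hmaps hs)).comp_hasDerivWithinAt s
      (hasDerivAt_characteristic c p s).hasDerivWithinAt hmaps
  have hle := image_norm_le_of_norm_deriv_right_le_deriv_boundary (B := B) (B' := B')
    (fun s hs => (hderiv s hs).continuousWithinAt)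
    (fun s hs => (hderiv s (Ico_subset_Icc_self hs)).mono_of_mem_nhdsWithin
      (Icc_mem_nhdsGE_of_mem hs))
    (hbase _ (hmaps ⟨le_rfl, hp.1.1⟩) rfl) hB
    (fun s hs => hbound _ (hmaps (Ico_subset_Icc_self hs)))
  simpa using hle (right_mem_Icc.2 hp.1.1)

theorem eq_zero_of_transport_isBigO {ι E : Type*} [Fintype ι] [NormedAddCommGroup E]
    [NormedSpace ℝ E] {c : ι → ℝ} {w : ℝ × ℝ → ι → E} {w' : ℝ × ℝ → ℝ × ℝ →L[ℝ] ι → E}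
    (hσ : 0 ≤ σ) (hc : ∀ i, |c i| ≤ σ)
    (hw : ∀ p ∈ backwardTriangle σ t x, HasFDerivWithinAt w (w' p) (backwardTriangle σ t x) p)
    (hsource : ∀ i, (fun p => w' p (1, c i) i) =O[𝓟 (backwardTriangle σ t x)] w)
    (hbase : ∀ p ∈ backwardTriangle σ t x, p.1 = 0 → w p = 0)
    {p : ℝ × ℝ} (hp : p ∈ backwardTriangle σ t x) : w p = 0 := by
  obtain ⟨M, hM0, hM⟩ := (isBigO_pi.2 hsource).exists_nonneg
  have hM_le : ∀ p ∈ backwardTriangle σ t x, ∀ i, ‖w' p (1, c i) i‖ ≤ M * ‖w p‖ := fun p hp i =>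
    (norm_le_pi_norm (fun i => w' p (1, c i) i) i).trans (eventually_principal.1 hM.bound p hp)
  -- Any rate `K > M` makes the estimate at the maximum a contraction.
  obtain ⟨K, hMK⟩ := exists_gt M
  have hK : 0 < K := hM0.trans_lt hMK
  obtain ⟨m, hm0, ⟨q, hq, hqm⟩, hle⟩ := exists_norm_eq_mul_of_isCompact
    (isCompact_backwardTriangle hσ) ⟨p, hp⟩ (fun p hp => (hw p hp).continuousWithinAt)
    (g := fun p => Real.exp (K * p.1)) (by fun_prop) fun _ _ => Real.exp_pos _
  have hcomponent : ∀ i, ‖w q i‖ ≤ M * m / K * Real.exp (K * q.1) := fun i => by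
    refine norm_le_of_norm_transport_le (f := fun p => w p i)
      (f' := fun p => (ContinuousLinearMap.proj i).comp (w' p))
      (B := fun s => M * m / K * Real.exp (K * s)) (B' := fun s => M * m * Real.exp (K * s))
      (hc i) (fun p hp => hasFDerivWithinAt_pi'.1 (hw p hp) i) (fun s => ?_) (fun p hp h0 => ?_)
      (fun p hp => ?_) hq
    · refine (((hasDerivAt_id s).const_mul K).exp.const_mul (M * m / K)).congr_deriv ?_
      simp only [id]
      field_simp
    · simp only [hbase p hp h0, Pi.zero_apply, norm_zero]
      positivity
    · calc ‖w' p (1, c i) i‖ ≤ M * ‖w p‖ := hM_le p hp i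
        _ ≤ M * (m * Real.exp (K * p.1)) := mul_le_mul_of_nonneg_left (hle p hp) hM0
        _ = M * m * Real.exp (K * p.1) := (mul_assoc ..).symm
  have hm_le : m ≤ M * m / K := by
    have hnorm := (pi_norm_le_iff_of_nonneg (by positivity)).2 hcomponent
    rw [hqm] at hnorm
    exact le_of_mul_le_mul_right hnorm (Real.exp_pos _)
  have hm_eq : m = 0 := by
    rw [le_div_iff₀ hK] at hm_le
    nlinarith
  simpa [hm_eq] using hle p hp

theorem eq_zero_of_leftEigenvector_isBigO {ι F : Type*} [Finite ι] [NormedAddCommGroup F]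
    [NormedSpace ℝ F] [FiniteDimensional ℝ F] {c : ι → ℝ} {U : ℝ × ℝ → F}
    {U' : ℝ × ℝ → ℝ × ℝ →L[ℝ] F} {ℓ : ι → F →L[ℝ] ℝ} (hσ : 0 ≤ σ)
    (hc : ∀ i, |c i| ≤ σ) (hℓ : ∀ v, (∀ i, ℓ i v = 0) → v = 0)
    (hU : ∀ p ∈ backwardTriangle σ t x, HasFDerivWithinAt U (U' p) (backwardTriangle σ t x) p)
    (hsource : ∀ i, (fun p => ℓ i (U' p (1, c i))) =O[𝓟 (backwardTriangle σ t x)] U)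
    (hbase : ∀ p ∈ backwardTriangle σ t x, p.1 = 0 → U p = 0)
    {p : ℝ × ℝ} (hp : p ∈ backwardTriangle σ t x) : U p = 0 := by
  cases nonempty_fintype ι
  set L : F →L[ℝ] ι → ℝ := ContinuousLinearMap.pi ℓ
  have hker : LinearMap.ker (L : F →ₗ[ℝ] ι → ℝ) = ⊥ :=
    LinearMap.ker_eq_bot'.2 fun v hv => hℓ v fun i => congr_fun hv i
  obtain ⟨N, -, hN⟩ := LinearMap.exists_antilipschitzWith _ hker
  have hUL : U =O[𝓟 (backwardTriangle σ t x)] fun p => L (U p) :=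
    .of_bound N (Eventually.of_forall fun p => hN.le_mul_norm (map_zero L) (U p))
  refine hℓ _ fun i => congr_fun (eq_zero_of_transport_isBigO (w := fun p => L (U p))
    (w' := fun p => L.comp (U' p)) hσ hc (fun p hp => L.hasFDerivAt.comp_hasFDerivWithinAt p
      (hU p hp)) (fun i => (hsource i).trans hUL) (fun p hp h0 => ?_) hp) i
  simp [hbase p hp h0]

end Transport

section PartialDerivatives

/-- The space-time strip `[0, T) × ℝ` on which the solutions live. -/
abbrev strip (T : ℝ) : Set (ℝ × ℝ) := Ico 0 T ×ˢ univ

variable {T : ℝ} {f : ℝ × ℝ → ℝ} {p : ℝ × ℝ}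

lemma uniqueDiffOn_strip (T : ℝ) : UniqueDiffOn ℝ (strip T) :=
  (uniqueDiffOn_Ico 0 T).prod uniqueDiffOn_univ

lemma hasDerivAt_fderivWithin_strip (hf : DifferentiableWithinAt ℝ f (strip T) p)
    (hp : p ∈ strip T) :
    HasDerivAt (fun y => f (p.1, y)) (fderivWithin ℝ f (strip T) p (0, 1)) p.2 := by
  rw [← hasDerivWithinAt_univ]
  exact hf.hasFDerivWithinAt.comp_hasDerivWithinAt (f := fun y : ℝ => (p.1, y)) p.2
    ((hasDerivWithinAt_const ..).prodMk (hasDerivWithinAt_id ..)) fun _ _ => ⟨hp.1, mem_univ _⟩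

lemma pderivX_eq_fderivWithin (hf : DifferentiableWithinAt ℝ f (strip T) p) (hp : p ∈ strip T) :
    pderivX f p = fderivWithin ℝ f (strip T) p (0, 1) :=
  (hasDerivAt_fderivWithin_strip hf hp).deriv

lemma hasDerivAt_pderivX (hf : DifferentiableWithinAt ℝ f (strip T) p) (hp : p ∈ strip T) :
    HasDerivAt (fun y => f (p.1, y)) (pderivX f p) p.2 := by
  rw [pderivX_eq_fderivWithin hf hp]
  exact hasDerivAt_fderivWithin_strip hf hp

lemma pderivT_eq_fderivWithin (hf : DifferentiableWithinAt ℝ f (strip T) p) (hp : p ∈ strip T) :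
    pderivT T f p = fderivWithin ℝ f (strip T) p (1, 0) := by
  refine HasDerivWithinAt.derivWithin ?_ (uniqueDiffOn_Ico 0 T p.1 hp.1)
  exact hf.hasFDerivWithinAt.comp_hasDerivWithinAt (f := fun s : ℝ => (s, p.2)) p.1
    ((hasDerivWithinAt_id ..).prodMk (hasDerivWithinAt_const ..)) fun _ hs => ⟨hs, mem_univ _⟩

lemma fderivWithin_strip_apply (hf : DifferentiableWithinAt ℝ f (strip T) p) (hp : p ∈ strip T)
    (c : ℝ) : fderivWithin ℝ f (strip T) p (1, c) = pderivT T f p + c * pderivX f p := by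
  rw [pderivT_eq_fderivWithin hf hp, pderivX_eq_fderivWithin hf hp, ← smul_eq_mul, ← map_smul,
    ← map_add]
  simp

lemma continuousOn_fderivWithin_strip_apply (hf : ContDiffOn ℝ 1 f (strip T)) (v : ℝ × ℝ) :
    ContinuousOn (fun p => fderivWithin ℝ f (strip T) p v) (strip T) :=
  (hf.continuousOn_fderivWithin (uniqueDiffOn_strip T) le_rfl).clm_apply continuousOn_const

lemma continuousOn_pderivT (hf : ContDiffOn ℝ 1 f (strip T)) :
    ContinuousOn (pderivT T f) (strip T) :=
  (continuousOn_fderivWithin_strip_apply hf (1, 0)).congr fun p hp =>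
    pderivT_eq_fderivWithin (hf.differentiableOn one_ne_zero p hp) hp

lemma continuousOn_pderivX (hf : ContDiffOn ℝ 1 f (strip T)) :
    ContinuousOn (pderivX f) (strip T) :=
  (continuousOn_fderivWithin_strip_apply hf (0, 1)).congr fun p hp =>
    pderivX_eq_fderivWithin (hf.differentiableOn one_ne_zero p hp) hp

lemma pderivX_mul {g : ℝ × ℝ → ℝ} (hf : DifferentiableWithinAt ℝ f (strip T) p)
    (hg : DifferentiableWithinAt ℝ g (strip T) p) (hp : p ∈ strip T) :
    pderivX (fun q => f q * g q) p = pderivX f p * g p + f p * pderivX g p :=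
  ((hasDerivAt_pderivX hf hp).mul (hasDerivAt_pderivX hg hp)).deriv

lemma pderivX_comp {φ : ℝ → ℝ} {φ' : ℝ} (hφ : HasDerivAt φ φ' (f p))
    (hf : DifferentiableWithinAt ℝ f (strip T) p) (hp : p ∈ strip T) :
    pderivX (fun q => φ (f q)) p = φ' * pderivX f p :=
  (hφ.comp p.2 (hasDerivAt_pderivX hf hp)).deriv

end PartialDerivatives

/-- A classical solution `(ρ, u, S)` on `[0, T) × ℝ` of the relaxation system with relaxation
parameter `τ` and an arbitrary pressure law `P`. -/
structure IsRelaxationSolution (P : ℝ → ℝ) (τ T : ℝ) (ρ u S : ℝ × ℝ → ℝ) : Prop where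
  contDiffOn_density : ContDiffOn ℝ 1 ρ (strip T)
  contDiffOn_velocity : ContDiffOn ℝ 1 u (strip T)
  contDiffOn_stress : ContDiffOn ℝ 1 S (strip T)
  density_pos : ∀ p ∈ strip T, 0 < ρ p
  mass : ∀ p ∈ strip T, pderivT T ρ p + pderivX (fun q => ρ q * u q) p = 0
  momentum : ∀ p ∈ strip T,
    ρ p * pderivT T u p + ρ p * u p * pderivX u p + pderivX (fun q => P (ρ q)) p = pderivX S p
  relaxation : ∀ p ∈ strip T,
    τ * ρ p * (pderivT T S p + u p * pderivX S p) - pderivX u p = -S p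

/-- The deviation of the state `(ρ, u, S)` from the rest state `(ρ̄, 0, 0)`. -/
def deviation (ρb : ℝ) (ρ u S : ℝ × ℝ → ℝ) (p : ℝ × ℝ) : ℝ × ℝ × ℝ :=
  (ρ p - ρb, u p, S p)

section Deviation

variable (ρb : ℝ) (ρ u S : ℝ × ℝ → ℝ) {l : Filter (ℝ × ℝ)}

lemma density_sub_isBigO_deviation : (fun p => ρ p - ρb) =O[l] deviation ρb ρ u S :=
  isBigO_of_le _ fun p => norm_fst_le (deviation ρb ρ u S p)

lemma velocity_isBigO_deviation : u =O[l] deviation ρb ρ u S :=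
  isBigO_of_le _ fun p => (norm_fst_le (u p, S p)).trans (norm_snd_le (deviation ρb ρ u S p))

lemma stress_isBigO_deviation : S =O[l] deviation ρb ρ u S :=
  isBigO_of_le _ fun p => (norm_snd_le (u p, S p)).trans (norm_snd_le (deviation ρb ρ u S p))

variable {ρ u S} in
lemma fderivWithin_deviation_apply {T : ℝ} {p : ℝ × ℝ}
    (hρ : DifferentiableWithinAt ℝ ρ (strip T) p) (hu : DifferentiableWithinAt ℝ u (strip T) p)
    (hS : DifferentiableWithinAt ℝ S (strip T) p) (hp : p ∈ strip T) (c : ℝ) :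
    fderivWithin ℝ (deviation ρb ρ u S) (strip T) p (1, c) =
      (pderivT T ρ p + c * pderivX ρ p, pderivT T u p + c * pderivX u p,
        pderivT T S p + c * pderivX S p) := by
  have hdev : HasFDerivWithinAt (deviation ρb ρ u S) _ (strip T) p :=
    (hρ.hasFDerivWithinAt.sub_const ρb).prodMk (hu.hasFDerivWithinAt.prodMk hS.hasFDerivWithinAt)
  rw [← fderivWithin_strip_apply hρ hp, ← fderivWithin_strip_apply hu hp,
    ← fderivWithin_strip_apply hS hp, hdev.fderivWithin (uniqueDiffOn_strip T p hp)]
  rfl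

end Deviation

section LeftEigenvectors

/-- The linear form with coefficients `α`, `β`, `δ` on the space of states `(ρ, u, S)`. -/
def stateForm (α β δ : ℝ) : ℝ × ℝ × ℝ →L[ℝ] ℝ :=
  (α • ContinuousLinearMap.id ℝ ℝ).coprod
    ((β • ContinuousLinearMap.id ℝ ℝ).coprod (δ • ContinuousLinearMap.id ℝ ℝ))

@[simp]
lemma stateForm_apply (α β δ : ℝ) (v : ℝ × ℝ × ℝ) :
    stateForm α β δ v = α * v.1 + β * v.2.1 + δ * v.2.2 := by
  simp [stateForm, add_assoc]

/-- The left eigenvectors, for the speeds `0`, `σ` and `-σ`, of the relaxation system linearised at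
the rest state of density `ρ̄`; here `a` stands for `p′(ρ̄)`. -/
def leftEigenvector (a τ ρb σ : ℝ) : Fin 3 → ℝ × ℝ × ℝ →L[ℝ] ℝ :=
  ![stateForm 1 0 (τ * ρb ^ 2), stateForm a (ρb * σ) (-1), stateForm a (ρb * -σ) (-1)]

lemma eq_zero_of_leftEigenvector_eq_zero {a τ ρb σ : ℝ} (hτ : τ ≠ 0) (hρb : ρb ≠ 0) (hσ : σ ≠ 0)
    (hσ_sq : σ ^ 2 = a + 1 / (τ * ρb ^ 2)) {v : ℝ × ℝ × ℝ}
    (hv : ∀ i, leftEigenvector a τ ρb σ i v = 0) : v = 0 := by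
  obtain ⟨r, y, z⟩ := v
  simp only [leftEigenvector, Fin.forall_fin_succ, Matrix.cons_val_zero, Matrix.cons_val_succ,
    stateForm_apply, IsEmpty.forall_iff, and_true] at hv
  obtain ⟨h₀, hplus, hminus⟩ := hv
  have hy : y = 0 := by
    have : ρb * σ * y = 0 := by linear_combination (hplus - hminus) / 2
    simpa [hρb, hσ] using this
  have hz : z = 0 := by
    have hdet : τ * ρb ^ 2 * σ ^ 2 = τ * ρb ^ 2 * a + 1 := by
      rw [hσ_sq]
      field_simp
    have : τ * ρb ^ 2 * σ ^ 2 * z = 0 := by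
      linear_combination a * h₀ - (hplus + hminus) / 2 + z * hdet
    simpa [hτ, hρb, hσ] using this
  have hr : r = 0 := by simpa [hy, hz] using h₀
  simp [hr, hy, hz]

end LeftEigenvectors

namespace IsRelaxationSolution

variable {P P' : ℝ → ℝ} {τ T ρb : ℝ} {ρ u S : ℝ × ℝ → ℝ}

lemma differentiableOn_density (h : IsRelaxationSolution P τ T ρ u S) :
    DifferentiableOn ℝ ρ (strip T) :=
  h.contDiffOn_density.differentiableOn one_ne_zero

lemma differentiableOn_velocity (h : IsRelaxationSolution P τ T ρ u S) :
    DifferentiableOn ℝ u (strip T) :=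
  h.contDiffOn_velocity.differentiableOn one_ne_zero

lemma differentiableOn_stress (h : IsRelaxationSolution P τ T ρ u S) :
    DifferentiableOn ℝ S (strip T) :=
  h.contDiffOn_stress.differentiableOn one_ne_zero

lemma differentiableOn_deviation (h : IsRelaxationSolution P τ T ρ u S) (ρb : ℝ) :
    DifferentiableOn ℝ (deviation ρb ρ u S) (strip T) :=
  (h.differentiableOn_density.sub_const ρb).prodMk
    (h.differentiableOn_velocity.prodMk h.differentiableOn_stress)

variable {K : Set (ℝ × ℝ)}

lemma linearized_mass_isBigO (h : IsRelaxationSolution P τ T ρ u S) (hK : IsCompact K)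
    (hKT : K ⊆ strip T) :
    (fun p => pderivT T ρ p + ρb * pderivX u p) =O[𝓟 K] deviation ρb ρ u S := by
  have hρx := (continuousOn_pderivX h.contDiffOn_density).mono hKT
  have hux := (continuousOn_pderivX h.contDiffOn_velocity).mono hKT
  have hsum := (isBigO_mul_of_continuousOn_of_isCompact hux.neg hK
    (density_sub_isBigO_deviation ρb ρ u S)).sub
      (isBigO_mul_of_continuousOn_of_isCompact hρx hK (velocity_isBigO_deviation ρb ρ u S))
  refine hsum.congr' (EqOn.eventuallyEq fun p hp => ?_) .rfl
  have hmass := h.mass p (hKT hp)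
  rw [pderivX_mul (h.differentiableOn_density p (hKT hp)) (h.differentiableOn_velocity p (hKT hp))
    (hKT hp)] at hmass
  simp only [Pi.neg_apply]
  linear_combination -hmass

lemma linearized_momentum_isBigO (h : IsRelaxationSolution P τ T ρ u S) (hρb : 0 < ρb)
    (hP : ∀ r, 0 < r → HasDerivAt P (P' r) r) (hP' : ContinuousOn P' (Ioi 0))
    (hP'_diff : DifferentiableAt ℝ P' ρb) (hK : IsCompact K) (hKT : K ⊆ strip T) :
    (fun p => ρb * pderivT T u p + P' ρb * pderivX ρ p - pderivX S p) =O[𝓟 K]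
      deviation ρb ρ u S := by
  have hρ := h.contDiffOn_density.continuousOn.mono hKT
  have hρx := (continuousOn_pderivX h.contDiffOn_density).mono hKT
  have hut := (continuousOn_pderivT h.contDiffOn_velocity).mono hKT
  have hux := (continuousOn_pderivX h.contDiffOn_velocity).mono hKT
  have hsum := ((isBigO_mul_of_continuousOn_of_isCompact hut.neg hK
    (density_sub_isBigO_deviation ρb ρ u S)).sub
      (isBigO_mul_of_continuousOn_of_isCompact (hρ.mul hux) hK
        (velocity_isBigO_deviation ρb ρ u S))).sub
      (isBigO_mul_of_continuousOn_of_isCompact hρx hK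
        ((comp_sub_isBigO_of_isCompact (Ioi_mem_nhds hρb) hP' hP'_diff hK hρ
          fun p hp => h.density_pos p (hKT hp)).trans (density_sub_isBigO_deviation ρb ρ u S)))
  refine hsum.congr' (EqOn.eventuallyEq fun p hp => ?_) .rfl
  have hmom := h.momentum p (hKT hp)
  rw [pderivX_comp (hP _ (h.density_pos p (hKT hp))) (h.differentiableOn_density p (hKT hp))
    (hKT hp)] at hmom
  simp only [Pi.neg_apply, Pi.mul_apply]
  linear_combination -hmom

lemma linearized_relaxation_isBigO (h : IsRelaxationSolution P τ T ρ u S) (hK : IsCompact K)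
    (hKT : K ⊆ strip T) :
    (fun p => τ * ρb * pderivT T S p - pderivX u p) =O[𝓟 K] deviation ρb ρ u S := by
  have hρ := h.contDiffOn_density.continuousOn.mono hKT
  have hSt := (continuousOn_pderivT h.contDiffOn_stress).mono hKT
  have hSx := (continuousOn_pderivX h.contDiffOn_stress).mono hKT
  have hsum := (((isBigO_mul_of_continuousOn_of_isCompact hSt hK
    (density_sub_isBigO_deviation ρb ρ u S)).add
      (isBigO_mul_of_continuousOn_of_isCompact (hρ.mul hSx) hK
        (velocity_isBigO_deviation ρb ρ u S))).const_mul_left (-τ)).sub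
      (stress_isBigO_deviation ρb ρ u S)
  refine hsum.congr' (EqOn.eventuallyEq fun p hp => ?_) .rfl
  simp only [Pi.mul_apply]
  linear_combination -h.relaxation p (hKT hp)

lemma stationary_transport_isBigO (h : IsRelaxationSolution P τ T ρ u S) (hK : IsCompact K)
    (hKT : K ⊆ strip T) :
    (fun p => stateForm 1 0 (τ * ρb ^ 2)
      (fderivWithin ℝ (deviation ρb ρ u S) (strip T) p (1, 0))) =O[𝓟 K] deviation ρb ρ u S := by
  refine ((h.linearized_mass_isBigO hK hKT).add
    ((h.linearized_relaxation_isBigO hK hKT).const_mul_left ρb)).congr'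
      (EqOn.eventuallyEq fun p hp => ?_) .rfl
  have hpT := hKT hp
  rw [fderivWithin_deviation_apply ρb (h.differentiableOn_density p hpT)
    (h.differentiableOn_velocity p hpT) (h.differentiableOn_stress p hpT) hpT, stateForm_apply]
  ring

lemma acoustic_transport_isBigO {c : ℝ} (h : IsRelaxationSolution P τ T ρ u S) (hτ : τ ≠ 0)
    (hρb : 0 < ρb) (hP : ∀ r, 0 < r → HasDerivAt P (P' r) r) (hP' : ContinuousOn P' (Ioi 0))
    (hP'_diff : DifferentiableAt ℝ P' ρb) (hc : c ^ 2 = P' ρb + 1 / (τ * ρb ^ 2))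
    (hK : IsCompact K) (hKT : K ⊆ strip T) :
    (fun p => stateForm (P' ρb) (ρb * c) (-1)
      (fderivWithin ℝ (deviation ρb ρ u S) (strip T) p (1, c))) =O[𝓟 K] deviation ρb ρ u S := by
  refine ((((h.linearized_mass_isBigO hK hKT).const_mul_left (P' ρb)).add
    ((h.linearized_momentum_isBigO hρb hP hP' hP'_diff hK hKT).const_mul_left c)).sub
    ((h.linearized_relaxation_isBigO hK hKT).const_mul_left (1 / (τ * ρb)))).congr'
      (EqOn.eventuallyEq fun p hp => ?_) .rfl
  have hpT := hKT hp
  rw [fderivWithin_deviation_apply ρb (h.differentiableOn_density p hpT)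
    (h.differentiableOn_velocity p hpT) (h.differentiableOn_stress p hpT) hpT, stateForm_apply]
  have hinv : 1 / (τ * ρb) * (τ * ρb) = 1 := by field_simp
  have hspeed : ρb * c ^ 2 = P' ρb * ρb + 1 / (τ * ρb) := by
    rw [hc]
    field_simp
  linear_combination -pderivX u p * hspeed - pderivT T S p * hinv

lemma leftEigenvector_transport_isBigO {σ : ℝ} (h : IsRelaxationSolution P τ T ρ u S) (hτ : τ ≠ 0)
    (hρb : 0 < ρb) (hP : ∀ r, 0 < r → HasDerivAt P (P' r) r) (hP' : ContinuousOn P' (Ioi 0))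
    (hP'_diff : DifferentiableAt ℝ P' ρb) (hσ_sq : σ ^ 2 = P' ρb + 1 / (τ * ρb ^ 2))
    (hK : IsCompact K) (hKT : K ⊆ strip T) (i : Fin 3) :
    (fun p => leftEigenvector (P' ρb) τ ρb σ i (fderivWithin ℝ (deviation ρb ρ u S) (strip T) p
      (1, ![0, σ, -σ] i))) =O[𝓟 K] deviation ρb ρ u S := by
  fin_cases i
  · exact h.stationary_transport_isBigO hK hKT
  · exact h.acoustic_transport_isBigO hτ hρb hP hP' hP'_diff hσ_sq hK hKT
  · exact h.acoustic_transport_isBigO hτ hρb hP hP' hP'_diff ((neg_sq σ).trans hσ_sq) hK hKT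

end IsRelaxationSolution

theorem finite_speed_of_propagation_general {P P' : ℝ → ℝ} {τ T R ρb σ : ℝ} {ρ u S : ℝ × ℝ → ℝ}
    (h : IsRelaxationSolution P τ T ρ u S) (hτ : τ ≠ 0) (hρb : 0 < ρb)
    (hP : ∀ r, 0 < r → HasDerivAt P (P' r) r) (hP' : ContinuousOn P' (Ioi 0))
    (hP'_diff : DifferentiableAt ℝ P' ρb) (hσ : 0 < σ)
    (hσ_sq : σ ^ 2 = P' ρb + 1 / (τ * ρb ^ 2))
    (hinit : ∀ x : ℝ, R ≤ |x| → ρ (0, x) = ρb ∧ u (0, x) = 0 ∧ S (0, x) = 0)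
    {t : ℝ} (ht : t ∈ Ico 0 T) {x : ℝ} (hx : R + σ * t ≤ |x|) :
    ρ (t, x) = ρb ∧ u (t, x) = 0 ∧ S (t, x) = 0 := by
  have hstrip : backwardTriangle σ t x ⊆ strip T := fun p hp =>
    ⟨⟨hp.1.1, hp.1.2.trans_lt ht.2⟩, mem_univ _⟩
  have hspeed : ∀ i, |![0, σ, -σ] i| ≤ σ := by
    simp [Fin.forall_fin_succ, abs_of_pos hσ, hσ.le]
  have hbase : ∀ p ∈ backwardTriangle σ t x, p.1 = 0 → deviation ρb ρ u S p = 0 := by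
    rintro ⟨s, y⟩ ⟨-, hy⟩ rfl
    have hRy : R ≤ |y| := by
      have := abs_sub_abs_le_abs_sub x y
      rw [abs_sub_comm, sub_zero] at hy
      linarith
    obtain ⟨hρ, hu, hS⟩ := hinit y hRy
    simp [deviation, hρ, hu, hS]
  have hapex : deviation ρb ρ u S (t, x) = 0 :=
    eq_zero_of_leftEigenvector_isBigO hσ.le hspeed
      (fun _ => eq_zero_of_leftEigenvector_eq_zero hτ hρb.ne' hσ.ne' hσ_sq)
      (fun p hp => (h.differentiableOn_deviation ρb p (hstrip hp)).hasFDerivWithinAt.mono hstrip)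
      (h.leftEigenvector_transport_isBigO hτ hρb hP hP' hP'_diff hσ_sq
        (isCompact_backwardTriangle hσ.le) hstrip)
      hbase (apex_mem_backwardTriangle ht.1)
  simpa [deviation, sub_eq_zero] using hapex

/-- Finite speed of propagation for the relaxation system: a `C¹` solution on
`[0,T) × ℝ`, bounded together with its first derivatives on every slab `[0,t] × ℝ`,
whose initial data is the constant state `(ρ̄, 0, 0)` for `|x| ≥ R`, equals the
constant state for `|x| ≥ R + σ t`, where `σ = √(p′(ρ̄) + 1/(τρ̄²))`. -/
theorem finite_speed_of_propagation
    (γ τ T R ρb : ℝ) (hγ : 1 < γ) (hτ : 0 < τ) (hT : 0 < T) (hR : 0 < R) (hρb : 0 < ρb)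
    (σ : ℝ) (hσ : σ = Real.sqrt (γ * ρb ^ (γ - 1) + 1 / (τ * ρb ^ 2)))
    (ρ u S : ℝ × ℝ → ℝ)
    (hρ : ContDiffOn ℝ 1 ρ (Set.Ico 0 T ×ˢ (Set.univ : Set ℝ)))
    (hu : ContDiffOn ℝ 1 u (Set.Ico 0 T ×ˢ (Set.univ : Set ℝ)))
    (hS : ContDiffOn ℝ 1 S (Set.Ico 0 T ×ˢ (Set.univ : Set ℝ)))
    (hpos : ∀ p ∈ Set.Ico 0 T ×ˢ (Set.univ : Set ℝ), 0 < ρ p)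
    (hmass : ∀ p ∈ Set.Ico 0 T ×ˢ (Set.univ : Set ℝ),
      pderivT T ρ p + pderivX (fun q => ρ q * u q) p = 0)
    (hmom : ∀ p ∈ Set.Ico 0 T ×ˢ (Set.univ : Set ℝ),
      ρ p * pderivT T u p + ρ p * u p * pderivX u p + pderivX (fun q => ρ q ^ γ) p
        = pderivX S p)
    (hrelax : ∀ p ∈ Set.Ico 0 T ×ˢ (Set.univ : Set ℝ),
      τ * ρ p * (pderivT T S p + u p * pderivX S p) - pderivX u p = - S p)
    (hbdd : ∀ t ∈ Set.Ico (0 : ℝ) T, ∃ C : ℝ, ∀ s ∈ Set.Icc (0 : ℝ) t, ∀ x : ℝ,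
      |ρ (s, x)| ≤ C ∧ |u (s, x)| ≤ C ∧ |S (s, x)| ≤ C ∧
      |pderivT T ρ (s, x)| ≤ C ∧ |pderivT T u (s, x)| ≤ C ∧ |pderivT T S (s, x)| ≤ C ∧
      |pderivX ρ (s, x)| ≤ C ∧ |pderivX u (s, x)| ≤ C ∧ |pderivX S (s, x)| ≤ C)
    (hinit : ∀ x : ℝ, R ≤ |x| → ρ (0, x) = ρb ∧ u (0, x) = 0 ∧ S (0, x) = 0) :
    ∀ t ∈ Set.Ico (0 : ℝ) T, ∀ x : ℝ, R + σ * t ≤ |x| →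
      ρ (t, x) = ρb ∧ u (t, x) = 0 ∧ S (t, x) = 0 := by
  have hσ_arg : 0 < γ * ρb ^ (γ - 1) + 1 / (τ * ρb ^ 2) := by positivity
  have hP' : ∀ r : ℝ, 0 < r → DifferentiableAt ℝ (fun r => γ * r ^ (γ - 1)) r := fun r hr =>
    (Real.differentiableAt_rpow_const_of_ne _ hr.ne').const_mul γ
  exact fun t ht x hx => finite_speed_of_propagation_general (P := (· ^ γ))
    ⟨hρ, hu, hS, hpos, hmass, hmom, hrelax⟩ hτ.ne' hρb
    (fun r hr => Real.hasDerivAt_rpow_const (.inl hr.ne'))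
    (fun r hr => (hP' r hr).continuousAt.continuousWithinAt) (hP' ρb hρb)
    (hσ ▸ Real.sqrt_pos.2 hσ_arg) (hσ ▸ Real.sq_sqrt hσ_arg.le) hinit ht hx
end

section
/- Let T ∈ (0, ∞], c₁, c₂, c₃, H > 0, let F : [0,T) → ℝ be differentiable with F(t) ≥ c₁ for all t ∈ [0,T), and let G : [0,T) → [0,∞) be integrable on compact subintervals with ∫₀^t G(s) ds ≤ H for all t ∈ [0,T). Assume that for all t ∈ [0,T): F′(t) ≥ (c₃ F(t)²)/(2(1+c₂t)³) − G(t)/2. Then for all t ∈ [0,T): 1/F(0) ≥ 1/F(0) − 1/F(t) ≥ −c₃/(4c₂(1+c₂t)²) + c₃/(4c₂) − H/(2c₁²). -/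
open MeasureTheory

/-!
Dividing `F' ≥ a F² - g` by `F²` gives `-(1 / F)' ≥ a - g / F² ≥ a - g / m²` wherever `F ≥ m > 0`
and `g ≥ 0`. Integrating in time, `1 / F` has to drop by at least the increase of an antiderivative
of `a`, up to the error `m⁻² ∫ g`. For `a(t) = c₃ / (2 (1 + c₂ t)³)` an antiderivative is
`-c₃ / (4 c₂ (1 + c₂ t)²)`.
-/

section Riccati

open Set

theorem sub_div_sq_le_div_sq {a g m x y : ℝ} (hm : 0 < m) (hmx : m ≤ x) (hg : 0 ≤ g)
    (h : a * x ^ 2 - g ≤ y) : a - g / m ^ 2 ≤ y / x ^ 2 := by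
  have hx : 0 < x := hm.trans_le hmx
  calc a - g / m ^ 2 ≤ a - g / x ^ 2 := by gcongr
    _ = (a * x ^ 2 - g) / x ^ 2 := by field_simp
    _ ≤ y / x ^ 2 := by gcongr

theorem le_inv_sub_inv_of_riccati {f f' A a g : ℝ → ℝ} {l r m : ℝ}
    (hlr : l ≤ r) (hm : 0 < m)
    (hf : ContinuousOn f (Icc l r)) (hf' : ∀ s ∈ Ioo l r, HasDerivWithinAt f (f' s) (Ioi s) s)
    (hA : ContinuousOn A (Icc l r)) (hA' : ∀ s ∈ Ioo l r, HasDerivWithinAt A (a s) (Ioi s) s)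
    (hmf : ∀ s ∈ Icc l r, m ≤ f s) (hg : ∀ s ∈ Ioo l r, 0 ≤ g s)
    (hgint : IntegrableOn g (Icc l r))
    (hric : ∀ s ∈ Ioo l r, a s * f s ^ 2 - g s ≤ f' s) :
    A r - A l - (∫ s in l..r, g s) / m ^ 2 ≤ (f l)⁻¹ - (f r)⁻¹ := by
  have hf_ne : ∀ s ∈ Icc l r, f s ≠ 0 := fun s hs => (hm.trans_le (hmf s hs)).ne'
  have hderiv : ∀ s ∈ Ioo l r,
      HasDerivWithinAt (fun s => A s + (f s)⁻¹) (a s + -f' s / f s ^ 2) (Ioi s) s := fun s hs =>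
    (hA' s hs).fun_add ((hf' s hs).fun_inv (hf_ne s (Ioo_subset_Icc_self hs)))
  have hbound : ∀ s ∈ Ioo l r, a s + -f' s / f s ^ 2 ≤ g s / m ^ 2 := fun s hs => by
    have := sub_div_sq_le_div_sq hm (hmf s (Ioo_subset_Icc_self hs)) (hg s hs) (hric s hs)
    rw [neg_div]
    linarith
  have hint := intervalIntegral.sub_le_integral_of_hasDeriv_right_of_le hlr
    (hA.fun_add (hf.fun_inv₀ hf_ne)) hderiv (hgint.div_const (m ^ 2)) hbound
  rw [intervalIntegral.integral_div] at hint
  linarith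

theorem hasDerivAt_neg_div_one_add_mul_sq {b : ℝ} (hb : b ≠ 0) (c : ℝ) {s : ℝ}
    (hs : 1 + b * s ≠ 0) :
    HasDerivAt (fun s => -(c / (4 * b * (1 + b * s) ^ 2))) (c / (2 * (1 + b * s) ^ 3)) s := by
  have haffine : HasDerivAt (fun s => 1 + b * s) b s := by
    simpa using ((hasDerivAt_id s).const_mul b).const_add 1
  have hquot := (hasDerivAt_const s c).fun_div ((haffine.fun_pow 2).const_mul (4 * b))
    (mul_ne_zero (mul_ne_zero four_ne_zero hb) (pow_ne_zero 2 hs))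
  refine hquot.fun_neg.congr_deriv ?_
  field_simp
  push_cast
  ring

theorem le_inv_sub_inv_of_riccati_cubic_decay {f f' g : ℝ → ℝ} {b c m t : ℝ}
    (ht : 0 ≤ t) (hm : 0 < m) (hb : b ≠ 0) (hbt : ∀ s ∈ Icc 0 t, 1 + b * s ≠ 0)
    (hf : ContinuousOn f (Icc 0 t)) (hf' : ∀ s ∈ Ioo 0 t, HasDerivWithinAt f (f' s) (Ioi s) s)
    (hmf : ∀ s ∈ Icc 0 t, m ≤ f s) (hg : ∀ s ∈ Ioo 0 t, 0 ≤ g s)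
    (hgint : IntegrableOn g (Icc 0 t))
    (hric : ∀ s ∈ Ioo 0 t, c * f s ^ 2 / (2 * (1 + b * s) ^ 3) - g s ≤ f' s) :
    c / (4 * b) - c / (4 * b * (1 + b * t) ^ 2) - (∫ s in (0 : ℝ)..t, g s) / m ^ 2
      ≤ (f 0)⁻¹ - (f t)⁻¹ := by
  have hA : ∀ s ∈ Icc 0 t, HasDerivAt (fun s => -(c / (4 * b * (1 + b * s) ^ 2)))
      (c / (2 * (1 + b * s) ^ 3)) s := fun s hs =>
    hasDerivAt_neg_div_one_add_mul_sq hb c (hbt s hs)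
  have hcomp := le_inv_sub_inv_of_riccati ht hm hf hf'
    (fun s hs => (hA s hs).continuousAt.continuousWithinAt)
    (fun s hs => (hA s (Ioo_subset_Icc_self hs)).hasDerivWithinAt) hmf hg hgint
    (fun s hs => by simpa only [mul_div_right_comm] using hric s hs)
  simp only [mul_zero, add_zero, one_pow, mul_one] at hcomp
  linarith

end Riccati

theorem riccati_comparison_general
    (T : EReal) (c₁ c₂ c₃ H : ℝ) (hc₁ : 0 < c₁) (hc₂ : c₂ ≠ 0)
    (hc₂T : ∀ t : ℝ, 0 ≤ t → (t : EReal) < T → 1 + c₂ * t ≠ 0)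
    (F F' G : ℝ → ℝ)
    (hF' : ∀ t : ℝ, 0 ≤ t → (t : EReal) < T →
      HasDerivWithinAt F (F' t) {s : ℝ | 0 ≤ s ∧ (s : EReal) < T} t)
    (hFc₁ : ∀ t : ℝ, 0 ≤ t → (t : EReal) < T → c₁ ≤ F t)
    (hGnonneg : ∀ t : ℝ, 0 ≤ t → (t : EReal) < T → 0 ≤ G t)
    (hGint : ∀ t : ℝ, 0 ≤ t → (t : EReal) < T → IntegrableOn G (Set.Icc 0 t))
    (hGH : ∀ t : ℝ, 0 ≤ t → (t : EReal) < T → (∫ s in (0 : ℝ)..t, G s) ≤ H)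
    (hRic : ∀ t : ℝ, 0 ≤ t → (t : EReal) < T →
      c₃ * F t ^ 2 / (2 * (1 + c₂ * t) ^ 3) - G t / 2 ≤ F' t) :
    ∀ t : ℝ, 0 ≤ t → (t : EReal) < T →
      (-(c₃ / (4 * c₂ * (1 + c₂ * t) ^ 2)) + c₃ / (4 * c₂) - H / (2 * c₁ ^ 2)
          ≤ 1 / F 0 - 1 / F t) ∧
      (1 / F 0 - 1 / F t ≤ 1 / F 0) := by
  intro t ht htT
  have hsub : Set.Icc 0 t ⊆ {s : ℝ | 0 ≤ s ∧ (s : EReal) < T} := fun s hs =>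
    ⟨hs.1, (EReal.coe_le_coe_iff.mpr hs.2).trans_lt htT⟩
  have hsub_Ioo := Set.Ioo_subset_Icc_self.trans hsub
  have hF : ∀ s ∈ Set.Icc 0 t, HasDerivWithinAt F (F' s) (Set.Icc 0 t) s := fun s hs =>
    (hF' s (hsub hs).1 (hsub hs).2).mono hsub
  have hcomp := le_inv_sub_inv_of_riccati_cubic_decay (g := fun s => G s / 2)
    ht hc₁ hc₂ (fun s hs => hc₂T s (hsub hs).1 (hsub hs).2)
    (fun s hs => (hF s hs).continuousWithinAt)
    (fun s hs => ((hF s (Set.Ioo_subset_Icc_self hs)).hasDerivAt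
      (Icc_mem_nhds hs.1 hs.2)).hasDerivWithinAt)
    (fun s hs => hFc₁ s (hsub hs).1 (hsub hs).2)
    (fun s hs => div_nonneg (hGnonneg s (hsub_Ioo hs).1 (hsub_Ioo hs).2) zero_le_two)
    ((hGint t ht htT).div_const 2) (fun s hs => hRic s (hsub_Ioo hs).1 (hsub_Ioo hs).2)
  have herror : (∫ s in (0 : ℝ)..t, G s / 2) / c₁ ^ 2 ≤ H / (2 * c₁ ^ 2) := by
    rw [intervalIntegral.integral_div, div_div]
    gcongr
    exact hGH t ht htT
  have hFt : 0 ≤ 1 / F t := one_div_nonneg.mpr (hc₁.le.trans (hFc₁ t ht htT))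
  refine ⟨?_, sub_le_self _ hFt⟩
  simp only [one_div]
  linarith

/-- Abstract Riccati-type comparison lemma on `[0,T)` (with `T ∈ (0,∞]`, modelled by
`T : EReal`): if `F ≥ c₁ > 0`, `F′(t) ≥ c₃F(t)²/(2(1+c₂t)³) − G(t)/2` with
`G ≥ 0` and `∫₀ᵗ G ≤ H`, then
`1/F(0) ≥ 1/F(0) − 1/F(t) ≥ −c₃/(4c₂(1+c₂t)²) + c₃/(4c₂) − H/(2c₁²)`. -/
theorem riccati_comparison
    (T : EReal) (hT : 0 < T)
    (c₁ c₂ c₃ H : ℝ) (hc₁ : 0 < c₁) (hc₂ : 0 < c₂) (hc₃ : 0 < c₃) (hH : 0 < H)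
    (F F' G : ℝ → ℝ)
    (hF' : ∀ t : ℝ, 0 ≤ t → (t : EReal) < T →
      HasDerivWithinAt F (F' t) {s : ℝ | 0 ≤ s ∧ (s : EReal) < T} t)
    (hFc₁ : ∀ t : ℝ, 0 ≤ t → (t : EReal) < T → c₁ ≤ F t)
    (hGnonneg : ∀ t : ℝ, 0 ≤ t → (t : EReal) < T → 0 ≤ G t)
    (hGint : ∀ t : ℝ, 0 ≤ t → (t : EReal) < T → IntegrableOn G (Set.Icc 0 t))
    (hGH : ∀ t : ℝ, 0 ≤ t → (t : EReal) < T → (∫ s in (0 : ℝ)..t, G s) ≤ H)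
    (hRic : ∀ t : ℝ, 0 ≤ t → (t : EReal) < T →
      c₃ * F t ^ 2 / (2 * (1 + c₂ * t) ^ 3) - G t / 2 ≤ F' t) :
    ∀ t : ℝ, 0 ≤ t → (t : EReal) < T →
      (-(c₃ / (4 * c₂ * (1 + c₂ * t) ^ 2)) + c₃ / (4 * c₂) - H / (2 * c₁ ^ 2)
          ≤ 1 / F 0 - 1 / F t) ∧
      (1 / F 0 - 1 / F t ≤ 1 / F 0) :=
  riccati_comparison_general T c₁ c₂ c₃ H hc₁ hc₂.ne' (fun t ht _ => by positivity)
    F F' G hF' hFc₁ hGnonneg hGint hGH hRic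
end
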